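/- Let χ : ℝ → ℝ be a smooth function with 0 ≤ χ ≤ 1, χ(x) = 1 for |x| ≤ 3, and χ(x) = 0 for |x| ≥ 6, and let 0 < p ≤ 1. Then there exists a constant C depending only on χ and p such that for all real numbers u, a, b with a ≠ 0 and b ≠ 0, one has |χ(u/a) − χ(u/b)| · |u|^{1+p} ≤ C |a − b| ( |a|^p + |b|^p ). -/

import Mathlib

theorem trunc_aux (χ : ℝ → ℝ) (L p : ℝ) (hL : 0 ≤ L)
    (hlip : ∀ x y, |χ x - χ y| ≤ L * |x - y|)
    (hχ0 : ∀ x, 0 ≤ χ x) (hχ1 : ∀ x, χ x ≤ 1)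
    (hχout : ∀ x : ℝ, 6 ≤ |x| → χ x = 0) (hp0 : 0 < p) (hp1 : p ≤ 1)
    (u a b : ℝ) (ha : a ≠ 0) (hb : b ≠ 0) (hab : |b| ≤ |a|) :
    |χ (u / a) - χ (u / b)| * |u| ^ (1 + p) ≤ (72 + 432 * L) * |a - b| * (|a| ^ p + |b| ^ p) := by
  have ha' : 0 < |a| := abs_pos.2 ha
  have hb' : 0 < |b| := abs_pos.2 hb
  have hbp : 0 ≤ |b| ^ p := by positivity
  have hap : 0 ≤ |a| ^ p := by positivity
  have hd : 0 ≤ |a - b| := abs_nonneg _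
  have hmono : (72 + 432 * L) * |a - b| * |a| ^ p
      ≤ (72 + 432 * L) * |a - b| * (|a| ^ p + |b| ^ p) := by
    gcongr
    linarith
  refine le_trans ?_ hmono
  by_cases hu : 6 * |a| ≤ |u|
  · have h1 : χ (u / a) = 0 := by
      apply hχout
      rw [abs_div, le_div_iff₀ ha']
      exact hu
    have h2 : χ (u / b) = 0 := by
      apply hχout
      rw [abs_div, le_div_iff₀ hb']
      linarith
    rw [h1, h2]
    simp only [sub_self, abs_zero, zero_mul]
    positivity
  push Not at hu
  have hup : |u| ^ p ≤ 6 * |a| ^ p := by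
    calc |u| ^ p ≤ (6 * |a|) ^ p := by gcongr
      _ = 6 ^ p * |a| ^ p := Real.mul_rpow (by norm_num) ha'.le
      _ ≤ 6 * |a| ^ p := by
        gcongr
        calc (6:ℝ) ^ p ≤ 6 ^ (1:ℝ) := Real.rpow_le_rpow_of_exponent_le (by norm_num) hp1
          _ = 6 := Real.rpow_one 6
  have hsplit : |u| ^ (1 + p) = |u| * |u| ^ p := by
    rw [Real.rpow_add_of_nonneg (abs_nonneg u) zero_le_one hp0.le, Real.rpow_one]
  have key : |χ (u / a) - χ (u / b)| * |u| ≤ (12 + 72 * L) * |a - b| := by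
    by_cases hc : 2 * |b| ≤ |a|
    · have h1 : |χ (u / a) - χ (u / b)| ≤ 1 := by
        rw [abs_le]
        constructor <;> linarith [hχ0 (u / a), hχ0 (u / b), hχ1 (u / a), hχ1 (u / b)]
      have h2 := abs_sub_abs_le_abs_sub a b
      calc |χ (u / a) - χ (u / b)| * |u| ≤ 1 * |u| := by gcongr
        _ ≤ 12 * |a - b| := by linarith
        _ ≤ (12 + 72 * L) * |a - b| := by
          gcongr
          linarith
    · push Not at hc
      have h1 : |u / a - u / b| = |u| * |a - b| / (|a| * |b|) := by
        rw [div_sub_div _ _ ha hb, abs_div, abs_sub_comm a b, ← abs_mul, ← abs_mul]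
        congr 2
        ring
      have h2 : |u| * |u| ≤ 72 * (|a| * |b|) := by
        nlinarith [abs_nonneg u]
      calc |χ (u / a) - χ (u / b)| * |u| ≤ L * (|u| * |a - b| / (|a| * |b|)) * |u| := by
            gcongr
            rw [← h1]
            exact hlip _ _
        _ = L * |a - b| * (|u| * |u| / (|a| * |b|)) := by ring
        _ ≤ L * |a - b| * 72 := by
          gcongr
          rw [div_le_iff₀ (by positivity)]
          exact h2
        _ ≤ (12 + 72 * L) * |a - b| := by nlinarith
  calc |χ (u / a) - χ (u / b)| * |u| ^ (1 + p)
      = (|χ (u / a) - χ (u / b)| * |u|) * |u| ^ p := by rw [hsplit]; ring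
    _ ≤ ((12 + 72 * L) * |a - b|) * (6 * |a| ^ p) := by gcongr
    _ = (72 + 432 * L) * |a - b| * |a| ^ p := by ring

/-- **Lipschitz-type estimate for the truncated nonlinearity.**
Let `χ : ℝ → ℝ` be smooth, `0 ≤ χ ≤ 1`, `χ = 1` on `|x| ≤ 3`, `χ = 0` on `|x| ≥ 6`,
and let `0 < p ≤ 1`. Then there is `C` depending only on `χ` and `p` such that for all
real `u`, `a ≠ 0`, `b ≠ 0`,
`|χ(u/a) − χ(u/b)| ⬝ |u|^{1+p} ≤ C |a − b| (|a|^p + |b|^p)`. -/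
theorem truncated_nonlinearity_contraction_estimate
    (χ : ℝ → ℝ) (hχsmooth : ContDiff ℝ (⊤ : ℕ∞) χ)
    (hχ0 : ∀ x, 0 ≤ χ x) (hχ1 : ∀ x, χ x ≤ 1)
    (hχin : ∀ x : ℝ, |x| ≤ 3 → χ x = 1) (hχout : ∀ x : ℝ, 6 ≤ |x| → χ x = 0)
    (p : ℝ) (hp0 : 0 < p) (hp1 : p ≤ 1) :
    ∃ C : ℝ, 0 < C ∧ ∀ u a b : ℝ, a ≠ 0 → b ≠ 0 →
      |χ (u / a) - χ (u / b)| * |u| ^ (1 + p) ≤ C * |a - b| * (|a| ^ p + |b| ^ p) := by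
  have hcs : HasCompactSupport χ := by
    apply HasCompactSupport.intro (isCompact_closedBall (0:ℝ) 6)
    intro x hx
    apply hχout
    simp only [Metric.mem_closedBall, dist_zero_right, Real.norm_eq_abs, not_le] at hx
    exact hx.le
  obtain ⟨K, hK⟩ := ContDiff.lipschitzWith_of_hasCompactSupport hcs hχsmooth (by simp)
  have hlip : ∀ x y, |χ x - χ y| ≤ (K:ℝ) * |x - y| := by
    intro x y
    have := hK.dist_le_mul x y
    simpa [Real.dist_eq] using this
  refine ⟨72 + 432 * (K:ℝ), by positivity, ?_⟩
  intro u a b ha hb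
  rcases le_total |b| |a| with h | h
  · exact trunc_aux χ K p K.2 hlip hχ0 hχ1 hχout hp0 hp1 u a b ha hb h
  · have := trunc_aux χ K p K.2 hlip hχ0 hχ1 hχout hp0 hp1 u b a hb ha h
    rw [abs_sub_comm (χ (u / a)), abs_sub_comm a b, add_comm (|a| ^ p)]
    exact this
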